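/- Let U be a unitary with a circuit decomposition U = U_D ∘ ... ∘ U_1, where each U_a is a product of gates on disjoint sets, and let τ be a causal time function on the gates with values in {1,...,τ_max} (meaning: whenever gates U_{S,a} and U_{T,b} satisfy b > a and S ∩ T ≠ ∅, then τ(T,b) > τ(S,a)). Then U equals the product V_{τ_max} ∘ ... ∘ V_1, where V_b is the product of all gates U_{S,a} with τ(S,a) = b. -/

import Mathlib

/-!
For a layering `f` of the gates (either `round` or `τ`) and a finite set `S` of gates, let
`layeredProd f S n` be the product of the layers `n, ..., 1` restricted to `S`, later layers standing
to the left. A gate `g` whose factor commutes with all factors in strictly later layers can be pulled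
out on the left: `layeredProd f (insert g S) n = u g * layeredProd f S n` (`layeredProd_insert`).

The theorem follows by induction on `S`, extracting a gate `g` of `S` with maximal `τ`. For the
layering `τ` there is no later layer at all; for the layering `round`, a gate `h` of a later round
whose support meets that of `g` would have `τ g < τ h` by causality, against maximality, so `u g`
commutes with every gate of a later round. Hence both products lose the same left factor `u g`.
-/

/-- The product of the layers `n, ..., 1` (in this order, left to right) of the gates in `S`, where
the layer `c` consists of the gates `g` with `f g = c`. Gates with `f g = 0` do not contribute. -/
def layeredProd {G Gate : Type*} [Monoid G] {u : Gate → G} (f : Gate → ℕ)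
    (hf : ∀ g h, f g = f h → Commute (u g) (u h)) (S : Finset Gate) : ℕ → G
  | 0 => 1
  | n + 1 => (S.filter fun g => f g = n + 1).noncommProd u
      (fun g hg h hh _ => hf g h
        ((Finset.mem_filter.1 hg).2.trans (Finset.mem_filter.1 hh).2.symm)) *
      layeredProd f hf S n

lemma layeredProd_eq_list_prod {G Gate : Type*} [Monoid G] {u : Gate → G} (f : Gate → ℕ)
    (hf : ∀ g h, f g = f h → Commute (u g) (u h)) (S : Finset Gate) (n : ℕ)
    (hc : ∀ a : ℕ, ((S.filter fun g => f g = a : Finset Gate) : Set Gate).Pairwise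
      fun g h => Commute (u g) (u h)) :
    (((List.range n).map fun a =>
        (S.filter fun g => f g = a + 1).noncommProd u (hc (a + 1))).reverse).prod
      = layeredProd f hf S n := by
  induction n with
  | zero => rfl
  | succ n ih =>
    rw [List.range_succ, List.map_append, List.reverse_append, List.prod_append, ih]
    simp [layeredProd]

lemma layeredProd_empty {G Gate : Type*} [Monoid G] {u : Gate → G} (f : Gate → ℕ)
    (hf : ∀ g h, f g = f h → Commute (u g) (u h)) (n : ℕ) :
    layeredProd f hf ∅ n = 1 := by
  induction n with
  | zero => rfl
  | succ n ih => simp [layeredProd, ih]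

lemma layeredProd_insert_of_lt {G Gate : Type*} [Monoid G] [DecidableEq Gate] {u : Gate → G}
    (f : Gate → ℕ) (hf : ∀ g h, f g = f h → Commute (u g) (u h)) (S : Finset Gate) (g : Gate)
    (n : ℕ) (hn : n < f g) :
    layeredProd f hf (insert g S) n = layeredProd f hf S n := by
  induction n with
  | zero => rfl
  | succ n ih =>
    simp only [layeredProd, ih (by omega), Finset.filter_insert, hn.ne', if_false]

/-- A gate that commutes with all gates in strictly later layers can be moved to the far left. -/
lemma layeredProd_insert {G Gate : Type*} [Monoid G] [DecidableEq Gate] {u : Gate → G}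
    (f : Gate → ℕ) (hf : ∀ g h, f g = f h → Commute (u g) (u h)) (S : Finset Gate) (g : Gate)
    (hg : g ∉ S) (hlater : ∀ h ∈ S, f g < f h → Commute (u g) (u h))
    (n : ℕ) (h1 : 1 ≤ f g) (hn : f g ≤ n) :
    layeredProd f hf (insert g S) n = u g * layeredProd f hf S n := by
  induction n with
  | zero => omega
  | succ n ih =>
    by_cases hgn : f g = n + 1
    · have hmem : g ∉ S.filter fun h => f h = n + 1 := fun h => hg (Finset.mem_filter.1 h).1
      simp only [layeredProd, layeredProd_insert_of_lt f hf S g n (by omega),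
        Finset.filter_insert, hgn, if_true]
      rw [Finset.noncommProd_insert_of_notMem _ _ _ _ hmem, mul_assoc]
    · simp only [layeredProd, ih (by omega), Finset.filter_insert, hgn, if_false]
      rw [← mul_assoc, ← mul_assoc]
      congr 1
      refine (Finset.noncommProd_commute _ _ _ _ fun h hh => ?_).symm
      obtain ⟨hS, hfh⟩ := Finset.mem_filter.1 hh
      exact hlater h hS (by omega)


/-- Given a circuit decomposition `U = U_D ∘ ... ∘ U_1` (each round a product of
gates on pairwise disjoint supports) and a causal time function `τ` with values in
`{1,...,τ_max}`, the unitary equals `V_{τ_max} ∘ ... ∘ V_1` where `V_b` is the product of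
all gates with `τ = b`. -/
theorem circuit_regrouping_by_causal_time_function
    {G : Type*} [Group G] {Site : Type*} {Gate : Type*} [Fintype Gate] [DecidableEq Gate]
    (round : Gate → ℕ) (supp : Gate → Set Site) (u : Gate → G)
    (D τmax : ℕ) (τ : Gate → ℕ)
    (hround : ∀ g, 1 ≤ round g ∧ round g ≤ D)
    (hτ : ∀ g, 1 ≤ τ g ∧ τ g ≤ τmax)
    (hdisj : ∀ g h, g ≠ h → round g = round h → Disjoint (supp g) (supp h))
    (hcomm : ∀ g h, Disjoint (supp g) (supp h) → Commute (u g) (u h))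
    (hcausal : ∀ g h, round g < round h → ¬ Disjoint (supp g) (supp h) → τ g < τ h)
    (hc₁ : ∀ a : ℕ, ((Finset.univ.filter fun g => round g = a : Finset Gate) : Set Gate).Pairwise
      fun g h => Commute (u g) (u h))
    (hc₂ : ∀ b : ℕ, ((Finset.univ.filter fun g => τ g = b : Finset Gate) : Set Gate).Pairwise
      fun g h => Commute (u g) (u h)) :
    (((List.range D).map fun a =>
        (Finset.univ.filter fun g => round g = a + 1).noncommProd u (hc₁ (a + 1))).reverse).prod
      = (((List.range τmax).map fun b =>
        (Finset.univ.filter fun g => τ g = b + 1).noncommProd u (hc₂ (b + 1))).reverse).prod := by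
  have hf₁ : ∀ g h, round g = round h → Commute (u g) (u h) := fun g h e => by
    by_cases hgh : g = h
    · exact hgh ▸ Commute.refl _
    · exact hcomm g h (hdisj g h hgh e)
  -- Gates with equal time commute: overlapping gates of different rounds have different times.
  have hf₂ : ∀ g h, τ g = τ h → Commute (u g) (u h) := fun g h e => by
    by_cases hd : Disjoint (supp g) (supp h)
    · exact hcomm g h hd
    · rcases lt_trichotomy (round g) (round h) with hlt | heq | hlt
      · exact absurd e (hcausal g h hlt hd).ne
      · exact hf₁ g h heq
      · exact absurd e (hcausal h g hlt (fun hd' => hd hd'.symm)).ne'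
  rw [layeredProd_eq_list_prod round hf₁, layeredProd_eq_list_prod τ hf₂]
  generalize (Finset.univ : Finset Gate) = S
  induction S using Finset.induction_on_max_value τ with
  | empty => rw [layeredProd_empty, layeredProd_empty]
  | insert g S hg hmax ih =>
    rw [layeredProd_insert round hf₁ S g hg _ D (hround g).1 (hround g).2,
      layeredProd_insert τ hf₂ S g hg _ τmax (hτ g).1 (hτ g).2, ih]
    · exact fun h hh hlt => absurd (hmax h hh) hlt.not_ge
    · intro h hh hlt
      by_contra hnc
      exact (hmax h hh).not_gt (hcausal g h hlt fun hd => hnc (hcomm g h hd))
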